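/- Let K = ℚ(√d) be a real quadratic field with d > 1 squarefree and fundamental unit ε > 1. Let p₁ = a₁ + b₁√d and p₂ = a₂ + b₂√d be prime elements of O_K, not in ℤ, not associate to each other, both with positive norm quotient σ₁(p_j)/σ₂(p_j) > 0 and satisfying ε^{-1}|σ₁(p_j)| < |σ₂(p_j)| ≤ ε|σ₁(p_j)| and N(p_j) ≤ 2N. Then b₁a₂ - b₂a₁ ≠ 0, and |Z(p₁) - Z(p₂)| ≥ c₁√d/(8Nε log ε), where Z(p) = log|σ₁(p)/σ₂(p)|/(2 log ε) and c₁ > 0 is a constant with |log x| ≥ c₁|x-1| on [ε^{-2}, ε²]. -/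

import Mathlib

open NumberField

lemma aux_rat_int (q : ℚ) (h : IsIntegral ℤ (q : ℝ)) : ∃ n : ℤ, q = n := by
  have h1 : IsIntegral ℤ q := by
    have : IsIntegral ℤ (algebraMap ℚ ℝ q) := by simpa using h
    exact (isIntegral_algebraMap_iff (algebraMap ℚ ℝ).injective).1 this
  obtain ⟨n, hn⟩ := IsIntegrallyClosed.isIntegral_iff.1 h1
  exact ⟨n, by simpa using hn.symm⟩

lemma aux_sqf (q : ℚ) (d : ℕ) (hsf : Squarefree d) (m : ℤ) (h : q * q * d = m) :
    ∃ n : ℤ, q = n := by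
  have hden : (q.den : ℚ) ≠ 0 := by exact_mod_cast q.den_nz
  have h1 : (q.num : ℚ) * q.num * d = m * (q.den * q.den) := by
    rw [← h]
    have := Rat.mul_den_eq_num q
    rw [← this]; ring
  have h2 : q.num * q.num * (d : ℤ) = m * ((q.den : ℤ) * q.den) := by exact_mod_cast h1
  have hc : IsCoprime (q.num) (q.den : ℤ) := by
    rw [Int.isCoprime_iff_gcd_eq_one]
    exact q.reduced
  have hc2 : IsCoprime ((q.den : ℤ) * q.den) (q.num * q.num) :=
    (IsCoprime.mul_left (hc.mul_right hc) (hc.mul_right hc)).symm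
  have h3 : ((q.den : ℤ) * q.den) ∣ (d : ℤ) :=
    hc2.dvd_of_dvd_mul_left (h2 ▸ Dvd.intro_left m rfl)
  have h4 : q.den * q.den ∣ d := by exact_mod_cast h3
  have h5 : q.den = 1 := by simpa using hsf _ h4
  exact ⟨q.num, (Rat.den_eq_one_iff q).1 h5 |>.symm⟩

lemma aux_int {K : Type*} [Field K] [NumberField K] (σ : K →+* ℝ) (x : 𝓞 K) :
    IsIntegral ℤ (σ (x : K)) := by
  have := x.isIntegral_coe
  exact this.map (σ.toIntAlgHom)

lemma aux_sig {K : Type*} [Field K] [NumberField K] (σ : K →+* ℝ) (s : K) (p : K) (a b : ℚ)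
    (hp : p = algebraMap ℚ K a + algebraMap ℚ K b * s) : σ p = a + b * σ s := by
  rw [hp]; simp

lemma aux_half {K : Type*} [Field K] [NumberField K]
    (σ₁ σ₂ : K →+* ℝ) (d : ℕ) (hsf : Squarefree d) (p : 𝓞 K) (a b : ℚ)
    (h1 : σ₁ (p : K) = a + b * Real.sqrt d) (h2 : σ₂ (p : K) = a + b * (-Real.sqrt d)) :
    (∃ A : ℤ, 2 * a = A) ∧ ∃ B : ℤ, 2 * b = B := by
  have i1 := aux_int σ₁ p
  have i2 := aux_int σ₂ p
  have hs : Real.sqrt d * Real.sqrt d = d := Real.mul_self_sqrt (Nat.cast_nonneg d)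
  constructor
  · apply aux_rat_int
    have := i1.add i2
    rw [h1, h2] at this
    have e : ((2 * a : ℚ) : ℝ) = (a + b * Real.sqrt d) + (a + b * (-Real.sqrt d)) := by
      push_cast; ring
    rw [e]; exact this
  · have h3 : ∃ m : ℤ, (2 * b) * (2 * b) * d = m := by
      apply aux_rat_int
      have := (i1.sub i2).mul (i1.sub i2)
      rw [h1, h2] at this
      have e : ((2 * b * (2 * b) * d : ℚ) : ℝ) =
          ((a + b * Real.sqrt d) - (a + b * (-Real.sqrt d))) *
          ((a + b * Real.sqrt d) - (a + b * (-Real.sqrt d))) := by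
        push_cast
        linear_combination (-4 * (b : ℝ) * b) * hs
      rw [e]; exact this
    obtain ⟨m, hm⟩ := h3
    exact aux_sqf _ d hsf m hm

/-- Non-integers with rational ratio: the algebraic part. -/
lemma aux_ne (K : Type*) [Field K] [NumberField K]
    (σ₁ σ₂ : K →+* ℝ) (d : ℕ) (sqd : K)
    (hσ1d : σ₁ sqd = Real.sqrt d) (hσ2d : σ₂ sqd = -Real.sqrt d)
    (ε : (𝓞 K)ˣ) (hε : 1 < σ₁ ((ε : 𝓞 K) : K))
    (hunits : ∀ u : (𝓞 K)ˣ, ∃ n : ℤ, u = ε ^ n ∨ u = -ε ^ n)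
    (p₁ p₂ : 𝓞 K) (hp₁ : Prime p₁) (hp₂ : Prime p₂)
    (a₁ b₁ a₂ b₂ : ℚ)
    (hrep₁ : (p₁ : K) = algebraMap ℚ K a₁ + algebraMap ℚ K b₁ * sqd)
    (hrep₂ : (p₂ : K) = algebraMap ℚ K a₂ + algebraMap ℚ K b₂ * sqd)
    (hz₂ : ¬ ∃ m : ℤ, (p₂ : K) = (m : K))
    (hassoc : ¬ Associated p₁ p₂)
    (hbal₂ : (σ₁ ((ε : 𝓞 K) : K))⁻¹ * |σ₁ (p₂ : K)| < |σ₂ (p₂ : K)| ∧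
      |σ₂ (p₂ : K)| ≤ σ₁ ((ε : 𝓞 K) : K) * |σ₁ (p₂ : K)|) :
    b₁ * a₂ - b₂ * a₁ ≠ 0 := by
  intro h0
  have e1 := aux_sig σ₁ sqd _ _ _ hrep₂
  have e2 := aux_sig σ₂ sqd _ _ _ hrep₂
  rw [hσ1d] at e1
  rw [hσ2d] at e2
  have hs : Real.sqrt d * Real.sqrt d = d := Real.mul_self_sqrt (Nat.cast_nonneg d)
  have hb2 : b₂ ≠ 0 := by
    intro hb
    have i1 := aux_int σ₁ p₂
    rw [e1, hb] at i1
    obtain ⟨n, hn⟩ := aux_rat_int a₂ (by simpa using i1)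
    exact hz₂ ⟨n, by rw [hrep₂, hb, hn]; simp⟩
  set r : ℚ := b₁ / b₂ with hr
  have hb1 : b₁ = r * b₂ := by rw [hr]; field_simp
  have ha1 : a₁ = r * a₂ := by rw [hr]; field_simp; linarith
  have hden : (r.den : K) ≠ 0 := by exact_mod_cast r.den_nz
  have hK : (r.den : K) * (p₁ : K) = (r.num : K) * (p₂ : K) := by
    have hq : (algebraMap ℚ K r) * r.den = r.num := by
      have := congrArg (algebraMap ℚ K) (Rat.mul_den_eq_num r)
      rwa [map_mul, map_natCast, map_intCast] at this
    rw [hrep₁, hrep₂, ha1, hb1, ← hq]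
    simp only [map_mul]; ring
  have hO : (r.den : 𝓞 K) * p₁ = (r.num : 𝓞 K) * p₂ := by
    apply RingOfIntegers.coe_injective
    push_cast
    simpa using hK
  have hdvd : p₂ ∣ (r.den : 𝓞 K) * p₁ := hO ▸ Dvd.intro_left _ rfl
  have hdvd' : p₂ ∣ (r.den : 𝓞 K) := by
    rcases hp₂.dvd_or_dvd hdvd with h | h
    · exact h
    · exact absurd ((hp₂.associated_of_dvd hp₁ h).symm) hassoc
  obtain ⟨t, ht⟩ := hdvd'
  have hnum : (r.num : 𝓞 K) = t * p₁ := by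
    apply mul_left_cancel₀ hp₂.ne_zero
    rw [ht] at hO
    linear_combination -hO
  have hc : IsCoprime (r.num) (r.den : ℤ) := by
    rw [Int.isCoprime_iff_gcd_eq_one]
    exact r.reduced
  obtain ⟨x, y, hxy⟩ := hc
  have hxy' : (x : 𝓞 K) * r.num + y * r.den = 1 := by exact_mod_cast congrArg (Int.cast : ℤ → 𝓞 K) hxy
  have htu : t * (x * p₁ + y * p₂) = 1 := by
    rw [← hxy', hnum, ht]; ring
  set w : 𝓞 K := x * p₁ + y * p₂ with hw
  have hwt : w * t = 1 := by rw [mul_comm]; exact htu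
  let u : (𝓞 K)ˣ := ⟨w, t, hwt, htu⟩
  have hp2 : p₂ = r.den * w := by
    rw [ht]; linear_combination (-p₂) * htu
  have hp2K : (p₂ : K) = r.den * (w : K) := by
    have := congrArg (algebraMap (𝓞 K) K) hp2
    simpa using this
  have hwtK : (w : K) * (t : K) = 1 := by
    have := congrArg (algebraMap (𝓞 K) K) hwt
    simpa using this
  have hdR : (r.den : ℝ) ≠ 0 := by exact_mod_cast r.den_nz
  have hdQ : (r.den : ℚ) ≠ 0 := by exact_mod_cast r.den_nz
  have f1 : σ₁ (p₂ : K) = r.den * σ₁ (w : K) := by rw [hp2K]; simp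
  have f2 : σ₂ (p₂ : K) = r.den * σ₂ (w : K) := by rw [hp2K]; simp
  have g1 : σ₁ (w : K) * σ₁ (t : K) = 1 := by rw [← map_mul, hwtK, map_one]
  have g2 : σ₂ (w : K) * σ₂ (t : K) = 1 := by rw [← map_mul, hwtK, map_one]
  set Q : ℚ := (a₂ * a₂ - b₂ * b₂ * d) / (r.den * r.den) with hQ
  have hQw : (Q : ℝ) = σ₁ (w : K) * σ₂ (w : K) := by
    have h1 : (r.den * r.den : ℝ) * (σ₁ (w : K) * σ₂ (w : K)) = a₂ * a₂ - b₂ * b₂ * d := by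
      calc (r.den * r.den : ℝ) * (σ₁ (w : K) * σ₂ (w : K)) = σ₁ (p₂ : K) * σ₂ (p₂ : K) := by
            rw [f1, f2]; ring
        _ = _ := by rw [e1, e2]; linear_combination (-(b₂ : ℝ) * b₂) * hs
    rw [hQ]; push_cast
    rw [← h1]; field_simp
  have hQt : ((Q⁻¹ : ℚ) : ℝ) = σ₁ (t : K) * σ₂ (t : K) := by
    push_cast
    rw [hQw]
    apply inv_eq_of_mul_eq_one_right
    linear_combination σ₂ (w : K) * σ₂ (t : K) * g1 + g2
  obtain ⟨m, hm⟩ := aux_rat_int Q (by rw [hQw]; exact (aux_int σ₁ w).mul (aux_int σ₂ w))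
  obtain ⟨m', hm'⟩ := aux_rat_int Q⁻¹ (by rw [hQt]; exact (aux_int σ₁ t).mul (aux_int σ₂ t))
  have hQ0 : Q ≠ 0 := by
    intro h
    have : (0 : ℝ) = σ₁ (w : K) * σ₂ (w : K) := by rw [← hQw, h]; simp
    rcases mul_eq_zero.1 this.symm with h | h
    · rw [h] at g1; simp at g1
    · rw [h] at g2; simp at g2
  have hmm : m * m' = 1 := by
    have : (m : ℚ) * m' = 1 := by rw [← hm, ← hm']; exact mul_inv_cancel₀ hQ0
    exact_mod_cast this
  have hmabs : |m| = 1 := Int.isUnit_iff_abs_eq.1 (IsUnit.of_mul_eq_one _ hmm)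
  have hnorm : |σ₁ (w : K)| * |σ₂ (w : K)| = 1 := by
    rw [← abs_mul, ← hQw, hm]
    have : ((|m| : ℤ) : ℝ) = 1 := by rw [hmabs]; simp
    simpa using this
  obtain ⟨n, hn⟩ := hunits u
  set E : ℝ := σ₁ ((ε : 𝓞 K) : K) with hE
  have hE0 : 0 < E := by linarith
  have hpowK : ∀ n : ℤ, ((((ε ^ n : (𝓞 K)ˣ)) : 𝓞 K) : K) = ((ε : 𝓞 K) : K) ^ n := by
    intro n
    exact NumberField.Units.coe_zpow ε n
  have hwabs : |σ₁ (w : K)| = E ^ n := by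
    have hu : ((u : 𝓞 K) : K) = (w : K) := rfl
    rw [← hu]
    rcases hn with hn | hn
    · rw [hn, hpowK, map_zpow₀, abs_of_pos (zpow_pos hE0 n)]
    · have hneg : (((-(ε ^ n) : (𝓞 K)ˣ) : 𝓞 K) : K) = -(((ε ^ n : (𝓞 K)ˣ) : 𝓞 K) : K) :=
        map_neg (algebraMap (𝓞 K) K) _
      rw [hn, hneg, hpowK, map_neg, map_zpow₀, abs_neg, abs_of_pos (zpow_pos hE0 n)]
  rw [f1, f2, abs_mul, abs_mul, hwabs] at hbal₂
  rw [hwabs] at hnorm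
  have hEn : 0 < E ^ n := zpow_pos hE0 n
  have hσ2w : |σ₂ (w : K)| = (E ^ n)⁻¹ := (inv_eq_of_mul_eq_one_right hnorm).symm
  have hda : 0 < |(r.den : ℝ)| := abs_pos.2 hdR
  rw [hσ2w] at hbal₂
  obtain ⟨k1, k2⟩ := hbal₂
  have k1' : E⁻¹ * E ^ n < (E ^ n)⁻¹ := by
    apply lt_of_mul_lt_mul_left _ hda.le
    calc _ = E⁻¹ * (|(r.den : ℝ)| * E ^ n) := by ring
      _ < _ := k1
  have k2' : (E ^ n)⁻¹ ≤ E * E ^ n := by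
    apply le_of_mul_le_mul_left _ hda
    calc _ ≤ _ := k2
      _ = _ := by ring
  have l1 : n - 1 < -n := by
    apply (zpow_lt_zpow_iff_right₀ hε).1
    rw [zpow_sub_one₀ hE0.ne', zpow_neg]; linarith
  have l2 : -n ≤ n + 1 := by
    apply (zpow_le_zpow_iff_right₀ hε).1
    rw [zpow_add_one₀ hE0.ne', zpow_neg]; linarith
  have hn0 : n = 0 := by omega
  subst hn0
  have hw1 : w = 1 ∨ w = -1 := by
    rcases hn with hn | hn
    · left; have := congrArg Units.val hn; simpa [u] using this
    · right; have := congrArg Units.val hn; simpa [u] using this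
  apply hz₂
  rcases hw1 with h | h
  · exact ⟨r.den, by rw [hp2K, h]; simp⟩
  · exact ⟨-r.den, by rw [hp2K, h]; simp⟩

/-- The purely real-analytic part. -/
lemma aux_real (E N c x₁ y₁ x₂ y₂ D : ℝ) (hE : 1 < E) (hN : 0 < N) (hc : 0 < c)
    (hpos₁ : 0 < x₁ / y₁) (hpos₂ : 0 < x₂ / y₂)
    (hbal₁ : E⁻¹ * |x₁| < |y₁| ∧ |y₁| ≤ E * |x₁|)
    (hbal₂ : E⁻¹ * |x₂| < |y₂| ∧ |y₂| ≤ E * |x₂|)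
    (hN₁ : |x₁ * y₁| ≤ 2 * N) (hN₂ : |x₂ * y₂| ≤ 2 * N)
    (hlog : ∀ x ∈ Set.Icc (E ^ (2 : ℤ))⁻¹ (E ^ (2 : ℤ)), c * |x - 1| ≤ |Real.log x|)
    (hD : D / 2 ≤ |x₁ * y₂ - y₁ * x₂|) :
    |Real.log |x₁ / y₁| / (2 * Real.log E) - Real.log |x₂ / y₂| / (2 * Real.log E)| ≥
      c * D / (8 * N * E * Real.log E) := by
  have hE0 : 0 < E := by linarith
  have hL : 0 < Real.log E := Real.log_pos hE
  have hx1 : x₁ ≠ 0 := by rintro rfl; simp at hpos₁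
  have hy1 : y₁ ≠ 0 := by rintro rfl; simp at hpos₁
  have hx2 : x₂ ≠ 0 := by rintro rfl; simp at hpos₂
  have hy2 : y₂ ≠ 0 := by rintro rfl; simp at hpos₂
  have ax1 : 0 < |x₁| := abs_pos.2 hx1
  have ay1 : 0 < |y₁| := abs_pos.2 hy1
  have ax2 : 0 < |x₂| := abs_pos.2 hx2
  have ay2 : 0 < |y₂| := abs_pos.2 hy2
  set x := (x₁ / y₁) / (x₂ / y₂) with hx
  have hxpos : 0 < x := div_pos hpos₁ hpos₂
  have b1 : |x₁| ≤ E * |y₁| := by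
    have := mul_le_mul_of_nonneg_left hbal₁.1.le hE0.le
    rwa [← mul_assoc, mul_inv_cancel₀ hE0.ne', one_mul] at this
  have b2 : |x₂| ≤ E * |y₂| := by
    have := mul_le_mul_of_nonneg_left hbal₂.1.le hE0.le
    rwa [← mul_assoc, mul_inv_cancel₀ hE0.ne', one_mul] at this
  have hxabs : x = (|x₁| * |y₂|) / (|y₁| * |x₂|) := by
    rw [← abs_of_pos hxpos, hx, abs_div, abs_div, abs_div]; field_simp
  have hmem : x ∈ Set.Icc (E ^ (2 : ℤ))⁻¹ (E ^ (2 : ℤ)) := by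
    have hz : E ^ (2 : ℤ) = E * E := by rw [zpow_ofNat]; ring
    rw [hz, hxabs]
    constructor
    · rw [inv_le_comm₀ (by positivity) (by positivity), inv_div, div_le_iff₀ (by positivity)]
      calc |y₁| * |x₂| ≤ (E * |x₁|) * (E * |y₂|) := by gcongr; exact hbal₁.2
        _ = _ := by ring
    · rw [div_le_iff₀ (by positivity)]
      calc |x₁| * |y₂| ≤ (E * |y₁|) * (E * |x₂|) := by gcongr; exact hbal₂.2
        _ = _ := by ring
  have hl := hlog x hmem
  have hden : |y₁| * |x₂| ≤ 2 * N * E := by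
    rw [abs_mul] at hN₁ hN₂
    have s1 : |y₁| * |y₁| ≤ 2 * N * E := by
      calc |y₁| * |y₁| ≤ (E * |x₁|) * |y₁| := by gcongr; exact hbal₁.2
        _ = (|x₁| * |y₁|) * E := by ring
        _ ≤ _ := by gcongr
    have s2 : |x₂| * |x₂| ≤ 2 * N * E := by
      calc |x₂| * |x₂| ≤ |x₂| * (E * |y₂|) := by gcongr
        _ = (|x₂| * |y₂|) * E := by ring
        _ ≤ _ := by gcongr
    nlinarith [sq_nonneg (|y₁| - |x₂|)]
  have hx1' : |x - 1| = |x₁ * y₂ - y₁ * x₂| / (|y₁| * |x₂|) := by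
    rw [← abs_mul, ← abs_div]; congr 1; rw [hx]; field_simp
  have hlow : D / (4 * N * E) ≤ |x - 1| := by
    rw [hx1']
    calc D / (4 * N * E) = (D / 2) / (2 * N * E) := by field_simp; ring
      _ ≤ |x₁ * y₂ - y₁ * x₂| / (2 * N * E) := by gcongr
      _ ≤ _ := by gcongr
  have hlogx : Real.log |x₁ / y₁| - Real.log |x₂ / y₂| = Real.log x := by
    rw [hx, Real.log_div hpos₁.ne' hpos₂.ne', Real.log_abs, Real.log_abs]
  rw [← sub_div, hlogx, abs_div, abs_of_pos (by positivity : 0 < 2 * Real.log E), ge_iff_le]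
  calc c * D / (8 * N * E * Real.log E) = c * (D / (4 * N * E)) / (2 * Real.log E) := by
        field_simp; ring
    _ ≤ c * |x - 1| / (2 * Real.log E) := by gcongr
    _ ≤ _ := by gcongr

/-- Spacing of the quantities `Z(p) = log|σ₁(p)/σ₂(p)|/(2 log ε)` for
non-associate prime elements `p₁ = a₁ + b₁√d`, `p₂ = a₂ + b₂√d` of a real
quadratic field, not in `ℤ`, with positive `σ₁/σ₂`, balanced conjugates and
norm at most `2N`: then `b₁a₂ - b₂a₁ ≠ 0` and
`|Z(p₁) - Z(p₂)| ≥ c₁√d/(8Nε log ε)`. -/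
theorem stmt14 (K : Type*) [Field K] [NumberField K]
    (hdeg : Module.finrank ℚ K = 2)
    (σ₁ σ₂ : K →+* ℝ) (hσ : σ₁ ≠ σ₂)
    (d : ℕ) (hd : 1 < d) (hsf : Squarefree d)
    (sqd : K) (hsqd : sqd * sqd = (d : K))
    (hσ1d : σ₁ sqd = Real.sqrt d) (hσ2d : σ₂ sqd = -Real.sqrt d)
    (ε : (𝓞 K)ˣ) (hε : 1 < σ₁ ((ε : 𝓞 K) : K))
    (hunits : ∀ u : (𝓞 K)ˣ, ∃ n : ℤ, u = ε ^ n ∨ u = -ε ^ n)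
    (N : ℝ) (hN : 0 < N)
    (p₁ p₂ : 𝓞 K) (hp₁ : Prime p₁) (hp₂ : Prime p₂)
    (a₁ b₁ a₂ b₂ : ℚ)
    (hrep₁ : (p₁ : K) = algebraMap ℚ K a₁ + algebraMap ℚ K b₁ * sqd)
    (hrep₂ : (p₂ : K) = algebraMap ℚ K a₂ + algebraMap ℚ K b₂ * sqd)
    (hz₁ : ¬ ∃ m : ℤ, (p₁ : K) = (m : K)) (hz₂ : ¬ ∃ m : ℤ, (p₂ : K) = (m : K))
    (hassoc : ¬ Associated p₁ p₂)
    (hpos₁ : 0 < σ₁ (p₁ : K) / σ₂ (p₁ : K)) (hpos₂ : 0 < σ₁ (p₂ : K) / σ₂ (p₂ : K))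
    (hbal₁ : (σ₁ ((ε : 𝓞 K) : K))⁻¹ * |σ₁ (p₁ : K)| < |σ₂ (p₁ : K)| ∧
      |σ₂ (p₁ : K)| ≤ σ₁ ((ε : 𝓞 K) : K) * |σ₁ (p₁ : K)|)
    (hbal₂ : (σ₁ ((ε : 𝓞 K) : K))⁻¹ * |σ₁ (p₂ : K)| < |σ₂ (p₂ : K)| ∧
      |σ₂ (p₂ : K)| ≤ σ₁ ((ε : 𝓞 K) : K) * |σ₁ (p₂ : K)|)
    (hN₁ : |σ₁ (p₁ : K) * σ₂ (p₁ : K)| ≤ 2 * N)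
    (hN₂ : |σ₁ (p₂ : K) * σ₂ (p₂ : K)| ≤ 2 * N)
    (c₁ : ℝ) (hc₁ : 0 < c₁)
    (hlog : ∀ x ∈ Set.Icc ((σ₁ ((ε : 𝓞 K) : K)) ^ (2 : ℤ))⁻¹
        ((σ₁ ((ε : 𝓞 K) : K)) ^ (2 : ℤ)), c₁ * |x - 1| ≤ |Real.log x|) :
    b₁ * a₂ - b₂ * a₁ ≠ 0 ∧
    |Real.log |σ₁ (p₁ : K) / σ₂ (p₁ : K)| / (2 * Real.log (σ₁ ((ε : 𝓞 K) : K))) -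
        Real.log |σ₁ (p₂ : K) / σ₂ (p₂ : K)| / (2 * Real.log (σ₁ ((ε : 𝓞 K) : K)))| ≥
      c₁ * Real.sqrt d /
        (8 * N * σ₁ ((ε : 𝓞 K) : K) * Real.log (σ₁ ((ε : 𝓞 K) : K))) := by
  have hne := aux_ne K σ₁ σ₂ d sqd hσ1d hσ2d ε hε hunits p₁ p₂ hp₁ hp₂ a₁ b₁ a₂ b₂ hrep₁ hrep₂
    hz₂ hassoc hbal₂
  refine ⟨hne, ?_⟩
  apply aux_real _ N c₁ _ _ _ _ _ hε hN hc₁ hpos₁ hpos₂ hbal₁ hbal₂ hN₁ hN₂ hlog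
  have e11 := aux_sig σ₁ sqd _ _ _ hrep₁
  have e12 := aux_sig σ₂ sqd _ _ _ hrep₁
  have e21 := aux_sig σ₁ sqd _ _ _ hrep₂
  have e22 := aux_sig σ₂ sqd _ _ _ hrep₂
  rw [hσ1d] at e11 e21
  rw [hσ2d] at e12 e22
  obtain ⟨⟨A₁, hA₁⟩, B₁, hB₁⟩ := aux_half σ₁ σ₂ d hsf p₁ a₁ b₁ e11 e12
  obtain ⟨⟨A₂, hA₂⟩, B₂, hB₂⟩ := aux_half σ₁ σ₂ d hsf p₂ a₂ b₂ e21 e22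
  have hq : 4 * (b₁ * a₂ - b₂ * a₁) = ((B₁ * A₂ - B₂ * A₁ : ℤ) : ℚ) := by
    push_cast
    rw [← hA₁, ← hA₂, ← hB₁, ← hB₂]; ring
  have hZ : B₁ * A₂ - B₂ * A₁ ≠ 0 := by
    intro h
    rw [h] at hq
    apply hne
    simpa using hq
  have hZ1 : (1 : ℝ) ≤ |((B₁ * A₂ - B₂ * A₁ : ℤ) : ℝ)| := by
    exact_mod_cast Int.one_le_abs hZ
  have hqR : 4 * ((b₁ : ℝ) * a₂ - b₂ * a₁) = ((B₁ * A₂ - B₂ * A₁ : ℤ) : ℝ) := by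
    exact_mod_cast congrArg (Rat.cast : ℚ → ℝ) hq
  have hdet : σ₁ (p₁ : K) * σ₂ (p₂ : K) - σ₂ (p₁ : K) * σ₁ (p₂ : K) =
      ((B₁ * A₂ - B₂ * A₁ : ℤ) : ℝ) * (Real.sqrt d / 2) := by
    rw [← hqR, e11, e12, e21, e22]; ring
  have hs0 : 0 ≤ Real.sqrt d / 2 := by positivity
  rw [hdet, abs_mul, abs_of_nonneg hs0]
  nlinarith
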